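/- For every rational number x with 1/2 ≤ x < 1, the entropy satisfies the functional (de Rham type) scaling equation S(x) = (x + 2)·H(1/(x + 2)); equivalently, S(x) = (x + 2)·S(1/(x + 2)) + x·ln x − (x + 2)·ln(x + 2). (Note 1/(x+2) ∈ (0,1/2), so H(1/(x+2)) is given by the first branch of the definition of H.) -/

import Mathlib

/-- Symbols for paths in the Farey binary tree. -/
inductive LR
  | L
  | R
deriving DecidableEq

/-- One step in the Farey binary tree: update the current pair of fractions
(represented as pairs (numerator, denominator) of naturals). -/
def fareyStep : ((ℕ × ℕ) × (ℕ × ℕ)) → LR → ((ℕ × ℕ) × (ℕ × ℕ))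
  | ((a, b), (c, d)), LR.L => ((a, b), (a + c, b + d))
  | ((a, b), (c, d)), LR.R => ((a + c, b + d), (c, d))

/-- The final pair of fractions of a word: after reading the first symbol `L`
the current pair is (0/1, 1/1); the remaining symbols update it. -/
def finalPair (w : List LR) : (ℕ × ℕ) × (ℕ × ℕ) :=
  w.tail.foldl fareyStep ((0, 1), (1, 1))

/-- The value ⟨w⟩ of a word: the mediant of its final pair, as (numerator, denominator). -/
def value (w : List LR) : ℕ × ℕ :=
  ((finalPair w).1.1 + (finalPair w).2.1, (finalPair w).1.2 + (finalPair w).2.2)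

/-- A word over {L,R} is a Farey word when its first symbol is `L`. -/
def IsFareyWord (w : List LR) : Prop := w.head? = some LR.L

/-- Concatenation of degree sequences:
[a₁,…,a_s] ⊕ [b₁,…,b_t] = [a₁+1, a₂, …, a_{s−1}, a_s+b₁, b₂, …, b_{t−1}, b_t+1]. -/
def oplus (A B : List ℕ) : List ℕ :=
  (A.dropLast.modifyHead (· + 1)) ++ [A.getLastD 0 + B.headD 0] ++ B.tail.dropLast
    ++ [B.getLastD 0 + 1]

/-- Update of the pair (D(left ancestor), D(right ancestor)) of unreduced degree
sequences along one symbol. -/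
def degStep : (List ℕ × List ℕ) → LR → (List ℕ × List ℕ)
  | (A, B), LR.L => (A, oplus A B)
  | (A, B), LR.R => (oplus A B, B)

/-- The pair (D(a/b), D(c/d)) of unreduced degree sequences of the final pair of a word;
0/1 and 1/1 are both assigned the list [1,1]. -/
def degPair (w : List LR) : List ℕ × List ℕ :=
  w.tail.foldl degStep ([1, 1], [1, 1])

/-- The unreduced degree sequence D(⟨w⟩) = D(a/b) ⊕ D(c/d) of the value of a word. -/
def Dseq (w : List LR) : List ℕ :=
  oplus (degPair w).1 (degPair w).2

/-- Reduction: [k₁,…,k_{q+1}] becomes [k₂,…,k_q, k₁+k_{q+1}]; the last entry is the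
boundary degree and the remaining ones are the inner degrees. -/
def reduce (D : List ℕ) : List ℕ :=
  D.tail.dropLast ++ [D.headD 0 + D.getLastD 0]

/-- The reduced degree sequence of the Haros graph G_{⟨w⟩}. -/
def degSeq (w : List LR) : List ℕ := reduce (Dseq w)

/-- Degree-distribution entropy S of the Haros graph G_{⟨w⟩}:
S = −Σ_k P(k)·ln P(k), summed over the degree values occurring in the reduced
degree sequence, where P(k) = m(k)/q. -/
noncomputable def Sent (w : List LR) : ℝ :=
  -∑ k ∈ (degSeq w).toFinset,
    (((degSeq w).count k : ℝ) / ((value w).2 : ℝ)) *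
      Real.log (((degSeq w).count k : ℝ) / ((value w).2 : ℝ))

/-- Reduced entropy H of the Haros graph G_{⟨w⟩} (with the convention 0·ln 0 = 0,
automatic since Real.log 0 = 0). -/
noncomputable def Hent (w : List LR) : ℝ :=
  let x : ℝ := ((value w).1 : ℝ) / ((value w).2 : ℝ)
  if x ≤ 1 / 2 then
    Sent w + 2 * x * Real.log x + (1 - 2 * x) * Real.log (1 - 2 * x)
  else
    Sent w + 2 * (1 - x) * Real.log (1 - x) + (2 * x - 1) * Real.log (2 * x - 1)

namespace HarosEntropy

/-- Exchange of the two symbols. -/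
def flip : LR → LR
  | LR.L => LR.R
  | LR.R => LR.L

/-- Coefficients `(x, y)` such that the mediant reached from a pair `(u, v)` by reading the
word is `x • u + y • v`. -/
def coefs : List LR → ℕ × ℕ
  | [] => (1, 1)
  | LR.L :: t => ((coefs t).1 + (coefs t).2, (coefs t).2)
  | LR.R :: t => ((coefs t).1, (coefs t).1 + (coefs t).2)

theorem coefs_pos (t : List LR) : 0 < (coefs t).1 ∧ 0 < (coefs t).2 := by
  induction t with
  | nil => simp [coefs]
  | cons s t ih => cases s <;> simp only [coefs] <;> omega

theorem coefs_injective : Function.Injective coefs := by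
  intro t
  induction t with
  | nil =>
    rintro (_ | ⟨_ | _, u⟩) h
    · rfl
    all_goals
      have := coefs_pos u
      simp only [coefs, Prod.ext_iff] at h
      omega
  | cons s t ih =>
    have ht := coefs_pos t
    rintro (_ | ⟨s', u⟩) h
    · cases s <;> simp only [coefs, Prod.ext_iff] at h <;> omega
    · have hu := coefs_pos u
      have key : s = s' ∧ coefs t = coefs u := by
        cases s <;> cases s' <;> simp only [coefs, Prod.ext_iff] at h <;>
          simp only [Prod.ext_iff, reduceCtorEq, true_and, false_and] <;> omega
      rw [key.1, ih key.2]

theorem coefs_map_flip (t : List LR) : coefs (t.map flip) = (coefs t).swap := by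
  induction t with
  | nil => rfl
  | cons s t ih =>
    cases s <;> simp only [List.map_cons, flip, coefs, ih, Prod.swap] <;>
      simp [add_comm]

theorem mediant_foldl_fareyStep (t : List LR) (a b c d : ℕ) :
    (t.foldl fareyStep ((a, b), (c, d))).1 + (t.foldl fareyStep ((a, b), (c, d))).2 =
      ((coefs t).1 * a + (coefs t).2 * c, (coefs t).1 * b + (coefs t).2 * d) := by
  induction t generalizing a b c d with
  | nil => simp [coefs]
  | cons s t ih =>
    cases s <;> simp only [List.foldl_cons, fareyStep, ih, coefs, Prod.mk.injEq] <;>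
      constructor <;> ring

theorem value_cons (s : LR) (t : List LR) :
    value (s :: t) = ((coefs t).2, (coefs t).1 + (coefs t).2) := by
  have h := mediant_foldl_fareyStep t 0 1 1 1
  simp only [mul_zero, mul_one, zero_add] at h
  exact h

theorem oplus_cons_append (a₀ a₁ b₀ b₁ : ℕ) (I J : List ℕ) :
    oplus (a₀ :: (I ++ [a₁])) (b₀ :: (J ++ [b₁])) =
      (a₀ + 1) :: ((I ++ (a₁ + b₀) :: J) ++ [b₁ + 1]) := by
  have hA : (a₀ :: (I ++ [a₁])).dropLast = a₀ :: I := by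
    rw [← List.cons_append, List.dropLast_concat]
  have hA' : (a₀ :: (I ++ [a₁])).getLastD 0 = a₁ := by
    rw [← List.cons_append, List.getLastD_concat]
  have hB' : (b₀ :: (J ++ [b₁])).getLastD 0 = b₁ := by
    rw [← List.cons_append, List.getLastD_concat]
  simp only [oplus, hA, hA', hB']
  simp

theorem reduce_cons_append (a b : ℕ) (I : List ℕ) :
    reduce (a :: (I ++ [b])) = I ++ [a + b] := by
  have h : (a :: (I ++ [b])).getLastD 0 = b := by
    rw [← List.cons_append, List.getLastD_concat]
  simp only [reduce, h]
  simp

/-- The relabelling of degrees induced by `x ↦ 1 / (x + 2)`. -/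
def shift (k : ℕ) : ℕ := if k ≤ 3 then k + 3 else k + 2

/-- The relation between the states reached by a word `t` starting with `R` (unreduced degree
sequences `P` and fractions `F`) and the degree sequences `P'` reached from the pair
`(1/3, 1/2)` by the flipped word. -/
def Related (P P' : List ℕ × List ℕ) (F : (ℕ × ℕ) × (ℕ × ℕ)) : Prop :=
  ∃ (a₀ a₁ b₀ b₁ a₁' b₀' : ℕ) (I J I' J' : List ℕ),
    P = (a₀ :: (I ++ [a₁]), b₀ :: (J ++ [b₁])) ∧
    P' = ((b₁ + 1) :: (I' ++ [a₁']), b₀' :: (J' ++ [a₀ + 1])) ∧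
    (I' : Multiset ℕ) = (J : Multiset ℕ).map shift + Multiset.replicate F.2.2 2
      + Multiset.replicate F.2.1 3 ∧
    (J' : Multiset ℕ) = (I : Multiset ℕ).map shift + Multiset.replicate F.1.2 2
      + Multiset.replicate F.1.1 3 ∧
    I.length + 1 = F.1.2 ∧ J.length + 1 = F.2.2 ∧
    (∀ k ∈ I, 2 ≤ k ∧ k ≠ 4) ∧ (∀ k ∈ J, 2 ≤ k ∧ k ≠ 4) ∧
    2 ≤ a₀ ∧ 2 ≤ a₁ ∧ 1 ≤ b₁ ∧ b₀' = a₁ + 1 ∧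
    (b₀ = 1 ∧ b₁ = 1 ∧ a₁ = 2 ∧ a₁' = 3 ∨ 3 ≤ b₀ ∧ a₁' = b₀ + 1)

theorem shift_add_eq {a₁ b₀ b₁ a₁' b₀' : ℕ} (ha₁ : 2 ≤ a₁) (hb₀' : b₀' = a₁ + 1)
    (h : b₀ = 1 ∧ b₁ = 1 ∧ a₁ = 2 ∧ a₁' = 3 ∨ 3 ≤ b₀ ∧ a₁' = b₀ + 1) :
    a₁' + b₀' = shift (a₁ + b₀) ∧ 2 ≤ a₁ + b₀ ∧ a₁ + b₀ ≠ 4 := by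
  unfold shift
  split_ifs <;> omega

theorem coe_append_cons_eq {I J I' J' : List ℕ} {m m' a b c d : ℕ} (hm : m' = shift m)
    (hI' : (I' : Multiset ℕ) = (J : Multiset ℕ).map shift + Multiset.replicate d 2
      + Multiset.replicate c 3)
    (hJ' : (J' : Multiset ℕ) = (I : Multiset ℕ).map shift + Multiset.replicate b 2
      + Multiset.replicate a 3) :
    ((I' ++ m' :: J' : List ℕ) : Multiset ℕ) =
      ((I ++ m :: J : List ℕ) : Multiset ℕ).map shift + Multiset.replicate (b + d) 2
        + Multiset.replicate (a + c) 3 := by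
  rw [← Multiset.coe_add, ← Multiset.coe_add, ← Multiset.cons_coe, ← Multiset.cons_coe, hI', hJ',
    Multiset.map_add, Multiset.map_cons, Multiset.replicate_add, Multiset.replicate_add, hm,
    ← Multiset.singleton_add, ← Multiset.singleton_add]
  abel

theorem Related.step {P P' : List ℕ × List ℕ} {F : (ℕ × ℕ) × (ℕ × ℕ)} (h : Related P P' F)
    (s : LR) : Related (degStep P s) (degStep P' (flip s)) (fareyStep F s) := by
  obtain ⟨⟨a, b⟩, ⟨c, d⟩⟩ := F
  obtain ⟨a₀, a₁, b₀, b₁, a₁', b₀', I, J, I', J', rfl, rfl, hI', hJ', hlI, hlJ, hI, hJ,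
    ha₀, ha₁, hb₁, hb₀', hc⟩ := h
  obtain ⟨hm, hm2, hm4⟩ := shift_add_eq ha₁ hb₀' hc
  have hD := coe_append_cons_eq hm hI' hJ'
  have hmem : ∀ k ∈ I ++ (a₁ + b₀) :: J, 2 ≤ k ∧ k ≠ 4 := by
    intro k hk
    rw [List.mem_append, List.mem_cons] at hk
    rcases hk with hk | rfl | hk
    exacts [hI k hk, ⟨hm2, hm4⟩, hJ k hk]
  have hlen : (I ++ (a₁ + b₀) :: J).length + 1 = b + d := by
    simp only [List.length_append, List.length_cons] at *
    omega
  cases s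
  · refine ⟨a₀, a₁, a₀ + 1, b₁ + 1, a₀ + 2, b₀', I, I ++ (a₁ + b₀) :: J, I' ++ (a₁' + b₀') :: J',
      J', ?_, ?_, hD, hJ', hlI, hlen, hI, hmem, ha₀, ha₁, by omega, hb₀', by omega⟩
    · simp only [degStep, oplus_cons_append]
    · simp only [flip, degStep, oplus_cons_append]
  · refine ⟨a₀ + 1, b₁ + 1, b₀, b₁, a₁', b₁ + 2, I ++ (a₁ + b₀) :: J, J, I',
      I' ++ (a₁' + b₀') :: J', ?_, ?_, hI', hD, hlen, hlJ, hmem, hJ, by omega, by omega, hb₁,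
      rfl, by omega⟩
    · simp only [degStep, oplus_cons_append]
    · simp only [flip, degStep, oplus_cons_append]

theorem Related.foldl {P P' : List ℕ × List ℕ} {F : (ℕ × ℕ) × (ℕ × ℕ)} (h : Related P P' F)
    (t : List LR) :
    Related (t.foldl degStep P) ((t.map flip).foldl degStep P') (t.foldl fareyStep F) := by
  induction t generalizing P P' F with
  | nil => exact h
  | cons s t ih => exact ih (h.step s)

theorem related_start :
    Related ([2, 2, 2], [1, 1]) ([2, 3, 2, 3], [3, 3, 2, 5, 2, 3]) ((1, 2), (1, 1)) :=
  ⟨2, 2, 1, 1, 3, 3, [2], [], [3, 2], [3, 2, 5, 2], rfl, rfl, by decide, by decide, rfl, rfl,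
    by decide, by decide, by decide, by decide, by decide, rfl, Or.inl ⟨rfl, rfl, rfl, rfl⟩⟩

theorem Related.reduce_oplus {P P' : List ℕ × List ℕ} {F : (ℕ × ℕ) × (ℕ × ℕ)}
    (h : Related P P' F) :
    (reduce (oplus P'.1 P'.2) : Multiset ℕ) = (reduce (oplus P.1 P.2) : Multiset ℕ).map shift
        + Multiset.replicate (F.1.2 + F.2.2) 2 + Multiset.replicate (F.1.1 + F.2.1) 3 ∧
      (reduce (oplus P.1 P.2)).length = F.1.2 + F.2.2 ∧
      ∀ k ∈ reduce (oplus P.1 P.2), 2 ≤ k ∧ k ≠ 4 := by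
  obtain ⟨⟨a, b⟩, ⟨c, d⟩⟩ := F
  obtain ⟨a₀, a₁, b₀, b₁, a₁', b₀', I, J, I', J', rfl, rfl, hI', hJ', hlI, hlJ, hI, hJ,
    ha₀, ha₁, hb₁, hb₀', hc⟩ := h
  obtain ⟨hm, hm2, hm4⟩ := shift_add_eq ha₁ hb₀' hc
  have hD := coe_append_cons_eq hm hI' hJ'
  have hbd : b₁ + 1 + 1 + (a₀ + 1 + 1) = shift (a₀ + 1 + (b₁ + 1)) := by
    unfold shift
    split_ifs <;> omega
  simp only [oplus_cons_append, reduce_cons_append]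
  refine ⟨?_, ?_, ?_⟩
  · rw [← Multiset.coe_add, hD, ← Multiset.coe_add (I ++ (a₁ + b₀) :: J), Multiset.map_add, hbd,
      Multiset.coe_singleton, Multiset.coe_singleton, Multiset.map_singleton]
    abel
  · simp only [List.length_append, List.length_cons, List.length_nil] at *
    omega
  · intro k hk
    simp only [List.mem_append, List.mem_cons, List.not_mem_nil, or_false] at hk
    rcases hk with (hk | rfl | hk) | rfl
    · exact hI k hk
    · exact ⟨hm2, hm4⟩
    · exact hJ k hk
    · omega

/-- The degrees of the Haros graph of `1 / (x + 2)` in terms of those of the graph of `x`,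
for `1/2 ≤ x`. -/
theorem degSeq_cons_cons_cons_map_flip {t : List LR} (ht : (coefs t).1 ≤ (coefs t).2) :
    (degSeq (LR.L :: LR.L :: LR.R :: t.map flip) : Multiset ℕ) =
        (degSeq (LR.L :: t) : Multiset ℕ).map shift
          + Multiset.replicate (value (LR.L :: t)).2 2
          + Multiset.replicate (value (LR.L :: t)).1 3 ∧
      (degSeq (LR.L :: t)).length = (value (LR.L :: t)).2 ∧
      (∀ k ∈ degSeq (LR.L :: t), 2 ≤ k) ∧
      Set.InjOn shift {k | k ∈ degSeq (LR.L :: t)} := by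
  match t, ht with
  | [], _ =>
    refine ⟨by decide, by decide, by decide, ?_⟩
    have h : {k | k ∈ degSeq [LR.L]} = {2, 4} := by
      ext k
      simp [degSeq, Dseq, degPair, oplus, reduce]
    rw [h]
    intro k hk l hl
    rcases hk with rfl | rfl <;> rcases hl with rfl | rfl <;> simp [shift]
  | LR.L :: u, ht =>
    have := coefs_pos u
    simp only [coefs] at ht
    omega
  | LR.R :: u, _ =>
    obtain ⟨h₁, h₂, h₃⟩ := (related_start.foldl u).reduce_oplus
    refine ⟨h₁, h₂, fun k hk => (h₃ k hk).1, fun k hk l hl hkl => ?_⟩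
    have hk4 := h₃ k hk
    have hl4 := h₃ l hl
    unfold shift at hkl
    split_ifs at hkl <;> omega

/-- The sum of `c * log c` over the multiplicities `c` of the elements of a multiset. -/
noncomputable def sumMulLog (s : Multiset ℕ) : ℝ :=
  ∑ k ∈ s.toFinset, (s.count k : ℝ) * Real.log (s.count k : ℝ)

theorem neg_sum_div_mul_log_div (s : Multiset ℕ) {q : ℕ} (hq : 0 < q) (hs : s.card = q) :
    -∑ k ∈ s.toFinset, ((s.count k : ℝ) / q) * Real.log ((s.count k : ℝ) / q) =
      Real.log q - sumMulLog s / q := by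
  have hq' : (q : ℝ) ≠ 0 := by positivity
  have hsum : ∑ k ∈ s.toFinset, (s.count k : ℝ) = q := by
    rw [← hs, ← Multiset.toFinset_sum_count_eq]
    push_cast
    rfl
  have hterm : ∀ k ∈ s.toFinset, ((s.count k : ℝ) / q) * Real.log ((s.count k : ℝ) / q) =
      (s.count k : ℝ) * Real.log (s.count k : ℝ) / q - (s.count k : ℝ) * (Real.log q / q) := by
    intro k hk
    have hk' : (s.count k : ℝ) ≠ 0 := by
      rw [Multiset.mem_toFinset, ← Multiset.count_ne_zero] at hk
      exact_mod_cast hk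
    rw [Real.log_div hk' hq']
    ring
  rw [Finset.sum_congr rfl hterm, Finset.sum_sub_distrib, ← Finset.sum_div, ← Finset.sum_mul, hsum,
    sumMulLog]
  field_simp
  ring

theorem sumMulLog_map_add_replicate {s : Multiset ℕ} {f : ℕ → ℕ} {p q : ℕ} (hp : 0 < p)
    (hq : 0 < q) (hf : Set.InjOn f {k | k ∈ s}) (hf3 : ∀ k ∈ s, 3 < f k) :
    sumMulLog (s.map f + Multiset.replicate q 2 + Multiset.replicate p 3) =
      sumMulLog s + q * Real.log q + p * Real.log p := by
  have hsupp : (s.map f + Multiset.replicate q 2 + Multiset.replicate p 3).toFinset =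
      insert 2 (insert 3 (s.toFinset.image f)) := by
    ext k
    simp only [Multiset.mem_toFinset, Multiset.mem_add, Multiset.mem_map, Multiset.mem_replicate,
      Finset.mem_insert, Finset.mem_image]
    simp only [ne_eq, hp.ne', hq.ne', not_false_eq_true, true_and]
    generalize (∃ a ∈ s, f a = k) = E
    tauto
  have hnot : ∀ j ≤ 3, j ∉ s.map f := by
    intro j hj hmem
    obtain ⟨k, hk, rfl⟩ := Multiset.mem_map.1 hmem
    exact absurd (hf3 k hk) (by omega)
  have hnot' : ∀ j ≤ 3, j ∉ s.toFinset.image f := by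
    intro j hj hmem
    obtain ⟨k, hk, rfl⟩ := Finset.mem_image.1 hmem
    exact absurd (hf3 k (Multiset.mem_toFinset.1 hk)) (by omega)
  have h2 : (s.map f).count 2 = 0 := Multiset.count_eq_zero.2 (hnot 2 (by omega))
  have h3 : (s.map f).count 3 = 0 := Multiset.count_eq_zero.2 (hnot 3 (by omega))
  rw [sumMulLog, hsupp, Finset.sum_insert, Finset.sum_insert (hnot' 3 (by omega)),
    Finset.sum_image]
  · have hterm : ∀ k ∈ s.toFinset,
        (s.map f + Multiset.replicate q 2 + Multiset.replicate p 3).count (f k) = s.count k := by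
      intro k hk
      rw [Multiset.mem_toFinset] at hk
      have := hf3 k hk
      rw [Multiset.count_add, Multiset.count_add, Multiset.count_replicate,
        Multiset.count_replicate, if_neg (by omega), if_neg (by omega),
        Multiset.count_map_eq_count f s hf k hk]
      rfl
    rw [Finset.sum_congr rfl fun k hk => by rw [hterm k hk]]
    simp only [Multiset.count_add, h2, h3, Multiset.count_replicate]
    norm_num [sumMulLog]
    ring
  · intro k hk l hl
    exact hf (Multiset.mem_toFinset.1 hk) (Multiset.mem_toFinset.1 hl)
  · simpa using hnot' 2 (by omega)

theorem Sent_eq {w : List LR} {q : ℕ} (hq : 0 < q) (hval : (value w).2 = q)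
    (hlen : (degSeq w).length = q) :
    Sent w = Real.log q - sumMulLog (degSeq w) / q := by
  rw [← neg_sum_div_mul_log_div (degSeq w) hq hlen, Sent, hval]
  simp only [Multiset.coe_count, List.toFinset]

end HarosEntropy

/-- for every rational x = p/q with 1/2 ≤ x < 1, the entropy satisfies
the de Rham type scaling equation S(x) = (x + 2)·H(1/(x + 2)); equivalently
S(x) = (x + 2)·S(1/(x + 2)) + x·ln x − (x + 2)·ln(x + 2). Here 1/(x+2) = q/(p+2q). -/
theorem statement14 (p q : ℕ) (hcop : Nat.Coprime p q) (hle : q ≤ 2 * p) (hlt : p < q)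
    (w w'' : List LR) (hw : IsFareyWord w) (hw'' : IsFareyWord w'')
    (hval : value w = (p, q)) (hval'' : value w'' = (q, p + 2 * q)) :
    Sent w = ((p : ℝ) / (q : ℝ) + 2) * Hent w'' ∧
    Sent w = ((p : ℝ) / (q : ℝ) + 2) * Sent w''
      + (p : ℝ) / (q : ℝ) * Real.log ((p : ℝ) / (q : ℝ))
      - ((p : ℝ) / (q : ℝ) + 2) * Real.log ((p : ℝ) / (q : ℝ) + 2) := by
  obtain ⟨t, rfl⟩ : ∃ t, w = LR.L :: t := by
    cases w <;> simp_all [IsFareyWord]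
  obtain ⟨t', rfl⟩ : ∃ t, w'' = LR.L :: t := by
    cases w'' <;> simp_all [IsFareyWord]
  have hv := hval
  have hv' := hval''
  rw [HarosEntropy.value_cons, Prod.mk.injEq] at hv hv'
  have hpos := HarosEntropy.coefs_pos t
  have hp : 0 < p := by omega
  have hq : 0 < q := by omega
  have hQ : 0 < p + 2 * q := by omega
  obtain rfl : t' = LR.L :: LR.R :: t.map HarosEntropy.flip := by
    apply HarosEntropy.coefs_injective
    simp only [HarosEntropy.coefs, HarosEntropy.coefs_map_flip, Prod.ext_iff, Prod.fst_swap,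
      Prod.snd_swap]
    omega
  obtain ⟨hdeg, hlen, htwo, hinj⟩ :=
    HarosEntropy.degSeq_cons_cons_cons_map_flip (t := t) (by omega)
  rw [hval] at hdeg hlen
  have hlen' : (degSeq (LR.L :: LR.L :: LR.R :: t.map HarosEntropy.flip)).length = p + 2 * q := by
    have h := congrArg Multiset.card hdeg
    simp only [Multiset.coe_card, Multiset.card_add, Multiset.card_map,
      Multiset.card_replicate] at h
    omega
  have hS := HarosEntropy.Sent_eq hq (by rw [hval]) hlen
  have hS' := HarosEntropy.Sent_eq hQ (by rw [hval'']) hlen'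
  rw [hdeg, HarosEntropy.sumMulLog_map_add_replicate hp hq hinj (fun k hk => by
    have := htwo k hk
    unfold HarosEntropy.shift
    split_ifs <;> omega)] at hS'
  have hp' : (0 : ℝ) < p := by exact_mod_cast hp
  have hq' : (0 : ℝ) < q := by exact_mod_cast hq
  push_cast at hS'
  have hQ' : (0 : ℝ) < p + 2 * q := by positivity
  have hx : (p : ℝ) / q + 2 = (p + 2 * q) / q := by field_simp
  have hx' : 1 - 2 * ((q : ℝ) / (p + 2 * q)) = p / (p + 2 * q) := by field_simp; ring
  have hhalf : (q : ℝ) / (p + 2 * q) ≤ 1 / 2 := by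
    rw [div_le_div_iff₀ hQ' two_pos]
    linarith
  have hH : Hent (LR.L :: LR.L :: LR.R :: t.map HarosEntropy.flip) =
      Sent (LR.L :: LR.L :: LR.R :: t.map HarosEntropy.flip)
        + 2 * ((q : ℝ) / (p + 2 * q)) * Real.log (q / (p + 2 * q))
        + p / (p + 2 * q) * Real.log (p / (p + 2 * q)) := by
    simp only [Hent, hval'']
    push_cast
    rw [if_pos hhalf, hx']
  rw [hH, hS', hS, hx, Real.log_div hp'.ne' hq'.ne', Real.log_div hQ'.ne' hq'.ne',
    Real.log_div hp'.ne' hQ'.ne', Real.log_div hq'.ne' hQ'.ne']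
  constructor
  · field_simp
    ring
  · field_simp
    ring
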